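/- Let 0 < m ≤ 1. There exists a constant c = c(m) > 0 such that for all u, ψ ∈ ℝ and all μ > 0 with ψ ≤ u and u^m ≤ ψ^m + μ^m, one has ((ψ^m + μ^m)^(1/m) − u)_+ ≤ c μ^m |u|^(1−m) + c μ, where (ψ^m + μ^m)^(1/m) is the signed power 1/m of the real number ψ^m + μ^m. -/

import Mathlib

/-!
Put `p = 1 / m ≥ 1`, `a = u^m` and `M = μ^m`, so that `u = a^p`, `|u|^(1-m) = |a|^(p-1)` and
`μ = M^p`. Monotonicity of signed powers turns `ψ ≤ u` into `ψ^m + μ^m ≤ a + M`, so it suffices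
to bound `(a + M)^p - a^p` by a multiple of `M |a|^(p-1) + M^p` (`spow_add_sub_le`). When `a` and
`a + M` have the same sign this is the tangent line inequality for the convex function `x ↦ x^p`
(`rpow_sub_rpow_le`); when the signs differ, both `|a|` and `|a + M|` are at most `M`.
-/

/-- Signed power: `a^k := |a|^(k-1) a`. -/
noncomputable def spow (a k : ℝ) : ℝ := |a| ^ (k - 1) * a

lemma spow_of_nonneg {x k : ℝ} (hx : 0 ≤ x) (hk : 0 < k) : spow x k = x ^ k := by
  unfold spow
  rcases hx.eq_or_lt with rfl | hx
  · simp [Real.zero_rpow hk.ne']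
  · rw [abs_of_pos hx, Real.rpow_sub_one hx.ne']
    field_simp

lemma spow_neg (x k : ℝ) : spow (-x) k = -spow x k := by
  simp [spow]

lemma spow_of_nonpos {x k : ℝ} (hx : x ≤ 0) (hk : 0 < k) : spow x k = -(-x) ^ k := by
  rw [← spow_of_nonneg (neg_nonneg.2 hx) hk, spow_neg, neg_neg]

lemma spow_mono {x y k : ℝ} (hk : 0 < k) (h : x ≤ y) : spow x k ≤ spow y k := by
  rcases le_total 0 x with hx | hx
  · rw [spow_of_nonneg hx hk, spow_of_nonneg (hx.trans h) hk]
    exact Real.rpow_le_rpow hx h hk.le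
  · rw [spow_of_nonpos hx hk]
    rcases le_total 0 y with hy | hy
    · rw [spow_of_nonneg hy hk]
      have h1 := Real.rpow_nonneg (neg_nonneg.2 hx) k
      have h2 := Real.rpow_nonneg hy k
      linarith
    · rw [spow_of_nonpos hy hk]
      have := Real.rpow_le_rpow (neg_nonneg.2 hy) (neg_le_neg h) hk.le
      linarith

lemma abs_spow (x : ℝ) {k : ℝ} (hk : 0 < k) : |spow x k| = |x| ^ k := by
  rcases le_total 0 x with hx | hx
  · rw [spow_of_nonneg hx hk, abs_of_nonneg hx, abs_of_nonneg (Real.rpow_nonneg hx k)]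
  · rw [spow_of_nonpos hx hk, abs_neg, abs_of_nonpos hx,
      abs_of_nonneg (Real.rpow_nonneg (neg_nonneg.2 hx) k)]

lemma spow_spow_one_div (x : ℝ) {k : ℝ} (hk : 0 < k) : spow (spow x k) (1 / k) = x := by
  have hk' : 0 < 1 / k := by positivity
  have key : ∀ z : ℝ, 0 ≤ z → spow (spow z k) (1 / k) = z := fun z hz => by
    rw [spow_of_nonneg hz hk, spow_of_nonneg (Real.rpow_nonneg hz k) hk', ← Real.rpow_mul hz,
      mul_one_div_cancel hk.ne', Real.rpow_one]
  rcases le_total 0 x with hx | hx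
  · exact key x hx
  · have := key (-x) (neg_nonneg.2 hx)
    rw [spow_neg, spow_neg] at this
    linarith

/-- The graph of `x ↦ x ^ p` lies above its tangent line at `t`; this is Bernoulli's inequality
after scaling by `t`. -/
lemma rpow_sub_rpow_le {s t p : ℝ} (hp : 1 ≤ p) (hs : 0 ≤ s) (hst : s ≤ t) :
    t ^ p - s ^ p ≤ p * t ^ (p - 1) * (t - s) := by
  rcases (hs.trans hst).eq_or_lt with rfl | ht
  · obtain rfl : s = 0 := le_antisymm hst hs
    simp
  · have hB := one_add_mul_self_le_rpow_one_add (s := s / t - 1)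
      (by have : 0 ≤ s / t := by positivity
          linarith) hp
    rw [add_sub_cancel, Real.div_rpow hs ht.le, le_div_iff₀ (Real.rpow_pos_of_pos ht p)] at hB
    have hpow : t ^ p = t ^ (p - 1) * t := by
      rw [Real.rpow_sub_one ht.ne']
      field_simp
    have h2 : (1 + p * (s / t - 1)) * t ^ p = t ^ p - p * t ^ (p - 1) * (t - s) := by
      rw [hpow]
      field_simp
      ring
    linarith

/-- Growth of the signed power under a shift by `M`. The factor `2 ^ (p - 1)` comes from
`a + M ≤ 2 max a M`, and the summand `2` covers the case where `a` and `a + M` differ in sign. -/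
lemma spow_add_sub_le {p a M : ℝ} (hp : 1 ≤ p) (hM : 0 < M) :
    spow (a + M) p - spow a p ≤
      (p * 2 ^ (p - 1) + 2) * (M * |a| ^ (p - 1)) + (p * 2 ^ (p - 1) + 2) * M ^ p := by
  have hp0 : 0 < p := by linarith
  have hp1 : 0 ≤ p - 1 := by linarith
  have hA : 0 ≤ |a| ^ (p - 1) := by positivity
  have hMA : 0 ≤ M * |a| ^ (p - 1) := by positivity
  have hMp : 0 ≤ M ^ p := by positivity
  have h2 : (1 : ℝ) ≤ 2 ^ (p - 1) := Real.one_le_rpow (by norm_num) hp1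
  have hpM : M ^ p = M ^ (p - 1) * M := by
    rw [Real.rpow_sub_one hM.ne']
    field_simp
  rcases le_total 0 a with ha | ha
  · have hy : 0 ≤ a + M := by linarith
    rw [spow_of_nonneg hy hp0, spow_of_nonneg ha hp0]
    have h := rpow_sub_rpow_le hp ha (by linarith : a ≤ a + M)
    have hsum : (a + M) ^ (p - 1) ≤ 2 ^ (p - 1) * (|a| ^ (p - 1) + M ^ (p - 1)) := by
      rw [abs_of_nonneg ha] at hA ⊢
      have hM1 : 0 ≤ M ^ (p - 1) := by positivity
      rcases le_total a M with h' | h'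
      · calc (a + M) ^ (p - 1) ≤ (2 * M) ^ (p - 1) := by
              apply Real.rpow_le_rpow hy _ hp1
              linarith
          _ = 2 ^ (p - 1) * M ^ (p - 1) := Real.mul_rpow (by norm_num) hM.le
          _ ≤ _ := by gcongr; linarith
      · calc (a + M) ^ (p - 1) ≤ (2 * a) ^ (p - 1) := by
              apply Real.rpow_le_rpow hy _ hp1
              linarith
          _ = 2 ^ (p - 1) * a ^ (p - 1) := Real.mul_rpow (by norm_num) ha
          _ ≤ _ := by gcongr; linarith
    have h3 : p * (a + M) ^ (p - 1) * (a + M - a) ≤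
        p * (2 ^ (p - 1) * (|a| ^ (p - 1) + M ^ (p - 1))) * M := by
      rw [add_sub_cancel_left]
      gcongr
    rw [hpM] at hMp ⊢
    linarith
  · rw [spow_of_nonpos ha hp0]
    rcases le_total 0 (a + M) with hy | hy
    · rw [spow_of_nonneg hy hp0]
      have h3 : (a + M) ^ p ≤ M ^ p := Real.rpow_le_rpow hy (by linarith) hp0.le
      have h4 : (-a) ^ p ≤ M ^ p := Real.rpow_le_rpow (by linarith) (by linarith) hp0.le
      have h5 : 0 ≤ (p * 2 ^ (p - 1) + 2) * (M * |a| ^ (p - 1)) := by positivity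
      have h6 : 0 ≤ p * 2 ^ (p - 1) * M ^ p := by positivity
      linarith
    · rw [spow_of_nonpos hy hp0]
      have h := rpow_sub_rpow_le hp (by linarith : 0 ≤ -(a + M)) (by linarith : -(a + M) ≤ -a)
      rw [← abs_of_nonpos ha] at h ⊢
      have e : |a| - -(a + M) = M := by
        rw [abs_of_nonpos ha]
        ring
      rw [e] at h
      have h5 : 0 ≤ (p * 2 ^ (p - 1) + 2) * M ^ p := by positivity
      have h6 : p * (M * |a| ^ (p - 1)) ≤ p * 2 ^ (p - 1) * (M * |a| ^ (p - 1)) := by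
        gcongr
        exact le_mul_of_one_le_right hp0.le h2
      linarith

/-- For `0 < m ≤ 1` there is `c = c(m) > 0` such that for all `u, ψ ∈ ℝ`, `μ > 0` with
`ψ ≤ u` and `u^m ≤ ψ^m + μ^m`:
`((ψ^m + μ^m)^(1/m) − u)_+ ≤ c μ^m |u|^(1−m) + c μ`. -/
theorem near_obstacle_estimate (m : ℝ) (hm0 : 0 < m) (hm1 : m ≤ 1) :
    ∃ c : ℝ, 0 < c ∧ ∀ u ψ μ : ℝ, 0 < μ → ψ ≤ u →
      spow u m ≤ spow ψ m + μ ^ m →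
      max (spow (spow ψ m + μ ^ m) (1 / m) - u) 0 ≤
        c * μ ^ m * |u| ^ (1 - m) + c * μ := by
  have hp : 1 ≤ 1 / m := by rwa [le_div_iff₀ hm0, one_mul]
  refine ⟨1 / m * 2 ^ (1 / m - 1) + 2, by positivity, fun u ψ μ hμ hψ _ => ?_⟩
  refine max_le ?_ (by positivity)
  have h1 := spow_mono (k := 1 / m) (by positivity)
    (add_le_add_left (spow_mono hm0 hψ) (μ ^ m))
  have h2 := spow_add_sub_le (a := spow u m) hp (Real.rpow_pos_of_pos hμ m)
  have e1 : (μ ^ m) ^ (1 / m) = μ := by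
    rw [← Real.rpow_mul hμ.le, mul_one_div_cancel hm0.ne', Real.rpow_one]
  have e2 : |spow u m| ^ (1 / m - 1) = |u| ^ (1 - m) := by
    rw [abs_spow u hm0, ← Real.rpow_mul (abs_nonneg u), mul_sub, mul_one_div_cancel hm0.ne',
      mul_one]
  rw [spow_spow_one_div u hm0, e1, e2] at h2
  linarith
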